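/- arXiv:0802.4458 — 10 statements merged into one kernel-verified Lean document; each statement's English description precedes it below -/
import Mathlib

section
/- Let X be a topological space equipped with an extended metric d : X × X → [0,∞] (d(x,y) = 0 iff x = y, d symmetric, d satisfying the triangle inequality) which is lower semi-continuous, i.e. for every r ∈ [0,∞) the set {(x,y) : d(x,y) ≤ r} is closed in X × X with the product topology. Then X is Hausdorff. If moreover X is compact, then the metric refines the topology: for every open U ⊆ X and every x ∈ U there is r > 0 with the open metric ball B(x,r) = {y : d(x,y) < r} contained in U. -/
open Set Topology NNReal ENNReal

/-- An extended metric on `X`: `d x y = 0` iff `x = y`, symmetric, triangle inequality. -/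
def IsExtMetric {X : Type*} (d : X → X → ℝ≥0∞) : Prop :=
  (∀ x y, d x y = 0 ↔ x = y) ∧ (∀ x y, d x y = d y x) ∧ ∀ x y z, d x z ≤ d x y + d y z

/-- The metric refines the topology. -/
def MetricRefines {X : Type*} [TopologicalSpace X] (d : X → X → ℝ≥0∞) : Prop :=
  ∀ U : Set X, IsOpen U → ∀ x ∈ U, ∃ r : ℝ≥0, 0 < r ∧ {y | d x y < (r : ℝ≥0∞)} ⊆ U

/-- The metric is lower semi-continuous: for every finite `r`,
`{(x,y) : d x y ≤ r}` is closed in the product topology. -/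
def LowerSemiContinuousMetric {X : Type*} [TopologicalSpace X] (d : X → X → ℝ≥0∞) : Prop :=
  ∀ r : ℝ≥0, IsClosed {p : X × X | d p.1 p.2 ≤ (r : ℝ≥0∞)}

/-- A topometric structure on a topological space. -/
def IsTopometric {X : Type*} [TopologicalSpace X] (d : X → X → ℝ≥0∞) : Prop :=
  IsExtMetric d ∧ MetricRefines d ∧ LowerSemiContinuousMetric d

/-- Distance from a point to a set (infimum over the set; `∞` when empty). -/
noncomputable def distToSet {X : Type*} (d : X → X → ℝ≥0∞) (x : X) (A : Set X) : ℝ≥0∞ :=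
  ⨅ a ∈ A, d x a

/-! A lower semi-continuous `d` has the diagonal `{d ≤ 0}` closed in `X × X`, so `X` is Hausdorff.
If `X` is compact and `U` is an open neighbourhood of `x`, then the lower semi-continuous function
`d x` attains its infimum on the compact set `Uᶜ`. That minimum is positive because `x ∉ Uᶜ`, and
every ball around `x` of radius at most the minimum lies in `U`. -/

section

variable {X γ : Type*} [TopologicalSpace X]

theorem lowerSemiContinuousMetric_iff_lowerSemicontinuous_uncurry {d : X → X → ℝ≥0∞} :
    LowerSemiContinuousMetric d ↔ LowerSemicontinuous (Function.uncurry d) := by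
  rw [lowerSemicontinuous_iff_isClosed_preimage, ENNReal.forall_ennreal]
  refine ⟨fun h => ⟨h, ?_⟩, fun h => h.1⟩
  rw [Iic_top, preimage_univ]
  exact isClosed_univ

theorem t2Space_of_lowerSemicontinuous_uncurry [LinearOrder γ] {f : X → X → γ} {c : γ}
    (hf : LowerSemicontinuous (Function.uncurry f)) (hdiag : ∀ x y, f x y ≤ c ↔ x = y) :
    T2Space X := by
  have diagonal_eq : diagonal X = Function.uncurry f ⁻¹' Iic c := by
    ext ⟨x, y⟩
    exact (hdiag x y).symm
  rw [t2_iff_isClosed_diagonal, diagonal_eq]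
  exact hf.isClosed_preimage c

theorem exists_mem_Ioo_forall_mem_lt_of_lowerSemicontinuousOn [LinearOrder γ] [DenselyOrdered γ]
    {f : X → γ} {K : Set X} {a b : γ} (hK : IsCompact K) (hf : LowerSemicontinuousOn f K)
    (hab : a < b) (hlt : ∀ x ∈ K, a < f x) : ∃ m ∈ Ioo a b, ∀ x ∈ K, m < f x := by
  obtain rfl | hne := K.eq_empty_or_nonempty
  · obtain ⟨m, hm⟩ := exists_between hab
    exact ⟨m, hm, fun _ h => h.elim⟩
  · obtain ⟨z, hzK, hmin⟩ := hf.exists_isMinOn hne hK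
    obtain ⟨m, ham, hm⟩ := exists_between (lt_min hab (hlt z hzK))
    obtain ⟨hmb, hmz⟩ := lt_min_iff.1 hm
    exact ⟨m, ⟨ham, hmb⟩, fun _ hx => hmz.trans_le (hmin hx)⟩

theorem metricRefines_of_lowerSemicontinuous [CompactSpace X] {d : X → X → ℝ≥0∞}
    (hlsc : ∀ x, LowerSemicontinuous (d x)) (hsep : ∀ x y, d x y = 0 → x = y) :
    MetricRefines d := by
  intro U hU x hxU
  have hpos : ∀ y ∈ Uᶜ, 0 < d x y := fun y hyU =>
    pos_iff_ne_zero.2 fun hzero => hyU (hsep x y hzero ▸ hxU)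
  obtain ⟨r, ⟨hr_pos, hr_top⟩, hr⟩ := exists_mem_Ioo_forall_mem_lt_of_lowerSemicontinuousOn
    hU.isClosed_compl.isCompact ((hlsc x).lowerSemicontinuousOn Uᶜ) ENNReal.zero_lt_top hpos
  lift r to ℝ≥0 using hr_top.ne
  refine ⟨r, ENNReal.coe_pos.1 hr_pos, fun y hy => ?_⟩
  by_contra hyU
  exact lt_asymm hy (hr y hyU)

theorem stmt_0_general (d : X → X → ℝ≥0∞) (hzero : ∀ x y, d x y = 0 ↔ x = y)
    (hlsc : LowerSemiContinuousMetric d) :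
    T2Space X ∧ (CompactSpace X → MetricRefines d) := by
  rw [lowerSemiContinuousMetric_iff_lowerSemicontinuous_uncurry] at hlsc
  refine ⟨t2Space_of_lowerSemicontinuous_uncurry (c := 0) hlsc fun x y => ?_, fun _ =>
    metricRefines_of_lowerSemicontinuous (fun x => ?_) fun x y => (hzero x y).1⟩
  · rw [nonpos_iff_eq_zero, hzero]
  · exact hlsc.comp (Continuous.prodMk_right x)

end

/-- a topological space with a lower semi-continuous extended metric is
Hausdorff; if moreover it is compact, the metric refines the topology. -/
theorem stmt_0 {X : Type*} [TopologicalSpace X] (d : X → X → ℝ≥0∞)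
    (hmet : IsExtMetric d) (hlsc : LowerSemiContinuousMetric d) :
    T2Space X ∧ (CompactSpace X → MetricRefines d) :=
  stmt_0_general d hmet.1 hlsc
end

section
/- Let X be a topometric space, F ⊆ X a compact subset, and r ∈ [0,∞). Then the closed metric neighbourhood B̄(F,r) = {x ∈ X : d(x,F) ≤ r} is closed in X. -/
open Set Topology NNReal ENNReal

/-!
For nonempty compact `F` and lower semi-continuous `d`, the infimum `d(x, F) = ⨅ a ∈ F, d x a` is
attained, so `b < d(x, F)` says that `b < d x a` for every `a ∈ F`. Each of these is an open
condition on `(x, a)`, and compactness of `F` makes them hold simultaneously for all `x'` near `x`.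
Thus `x ↦ d(x, F)` is lower semi-continuous, and its sublevel sets are closed.
-/

section Semicontinuity

variable {X Y β : Type*} [TopologicalSpace X] [TopologicalSpace Y] [CompleteLinearOrder β]
  {K : Set Y}

theorem lt_biInf_iff_of_isCompact_of_lowerSemicontinuousOn (hK : IsCompact K)
    (hK_nonempty : K.Nonempty) {f : Y → β} (hf : LowerSemicontinuousOn f K) {b : β} :
    b < ⨅ y ∈ K, f y ↔ ∀ y ∈ K, b < f y := by
  refine ⟨fun h y hy ↦ h.trans_le (biInf_le f hy), fun h ↦ ?_⟩
  obtain ⟨y₀, hy₀, hmin⟩ := hf.exists_isMinOn hK_nonempty hK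
  exact (h y₀ hy₀).trans_le (le_iInf₂ hmin)

theorem lowerSemicontinuous_biInf_of_isCompact (hK : IsCompact K) {f : X → Y → β}
    (hf : LowerSemicontinuous (Function.uncurry f)) :
    LowerSemicontinuous fun x ↦ ⨅ y ∈ K, f x y := by
  obtain rfl | hK_nonempty := K.eq_empty_or_nonempty
  · simpa only [mem_empty_iff_false, iInf_false, iInf_top] using lowerSemicontinuous_const
  have lt_biInf_iff (x : X) (b : β) : b < ⨅ y ∈ K, f x y ↔ ∀ y ∈ K, b < f x y :=
    lt_biInf_iff_of_isCompact_of_lowerSemicontinuousOn hK hK_nonempty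
      ((hf.comp (Continuous.prodMk_right x)).lowerSemicontinuousOn K)
  intro x b hb
  simp only [lt_biInf_iff] at hb ⊢
  exact hK.eventually_forall_of_forall_eventually fun y hy ↦ hf (x, y) b (hb y hy)

end Semicontinuity

section Topometric

variable {X : Type*} [TopologicalSpace X] {d : X → X → ℝ≥0∞}

theorem LowerSemiContinuousMetric.lowerSemicontinuous (hd : LowerSemiContinuousMetric d) :
    LowerSemicontinuous (Function.uncurry d) := by
  refine lowerSemicontinuous_iff_isClosed_preimage.2 fun r ↦ ?_
  cases r with
  | top => simp only [Iic_top, preimage_univ, isClosed_univ]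
  | coe r => exact hd r

theorem LowerSemiContinuousMetric.lowerSemicontinuous_distToSet
    (hd : LowerSemiContinuousMetric d) {F : Set X} (hF : IsCompact F) :
    LowerSemicontinuous fun x ↦ distToSet d x F :=
  lowerSemicontinuous_biInf_of_isCompact hF hd.lowerSemicontinuous

theorem stmt_1_general (hd : LowerSemiContinuousMetric d) {F : Set X} (hF : IsCompact F)
    (r : ℝ≥0∞) : IsClosed {x : X | distToSet d x F ≤ r} :=
  (hd.lowerSemicontinuous_distToSet hF).isClosed_preimage r

end Topometric

/-- in a topometric space, the closed metric neighbourhood of a compact set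
is closed. -/
theorem stmt_1 {X : Type*} [TopologicalSpace X] (d : X → X → ℝ≥0∞)
    (htm : IsTopometric d) (F : Set X) (hF : IsCompact F) (r : ℝ≥0) :
    IsClosed {x : X | distToSet d x F ≤ (r : ℝ≥0∞)} :=
  stmt_1_general htm.2.2 hF r
end

section
/- Let X be a regular Hausdorff topological space and d an extended metric on X such that for every closed set F ⊆ X and every r ∈ [0,∞) the set B̄(F,r) = {x : d(x,F) ≤ r} is closed in X. Then d is lower semi-continuous: for every r ∈ [0,∞) the set {(x,y) : d(x,y) ≤ r} is closed in X × X with the product topology. -/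
open Set Topology NNReal ENNReal

/-!
If `r < f x y`, lower semicontinuity of `f · y` and regularity provide a closed neighbourhood `F`
of `x` on which `f · y` stays above some level exceeding `r`. Hence `r < ⨅ a ∈ F, f a y`, and lower
semicontinuity of this infimum in `y` gives a neighbourhood `V` of `y` with `r < f` on `F × V`.
For `f = d` symmetric, the infimum is the distance to `F`, and `F = {y}` gives the
semicontinuity of `d · y`.
-/

theorem lowerSemicontinuous_uncurry_of_iInf_isClosed {X Y γ : Type*} [TopologicalSpace X]
    [RegularSpace X] [TopologicalSpace Y] [CompleteLinearOrder γ] {f : X → Y → γ}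
    (hf : ∀ y, LowerSemicontinuous fun x ↦ f x y)
    (hinf : ∀ F : Set X, IsClosed F → LowerSemicontinuous fun y ↦ ⨅ x ∈ F, f x y) :
    LowerSemicontinuous (Function.uncurry f) := by
  rintro ⟨x, y⟩ r (hr : r < f x y)
  obtain ⟨s, hrs, t, htf, hst⟩ := hr.exists_disjoint_Iio_Ioi
  obtain ⟨F, hFx, hF, htF⟩ := exists_mem_nhds_isClosed_subset (hf y x t htf)
  have hsF (a : X) (ha : a ∈ F) : s ≤ f a y :=
    le_of_forall_lt fun c hc ↦ hst c hc _ (htF ha)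
  have hr_inf : r < ⨅ a ∈ F, f a y := hrs.trans_le (le_iInf₂ hsF)
  filter_upwards [prod_mem_nhds hFx (hinf F hF y r hr_inf)] with ⟨a, b⟩ ⟨ha, hb⟩
  exact hb.trans_le (iInf₂_le a ha)

theorem lowerSemicontinuous_ennreal_iff_isClosed_le_coe {X : Type*} [TopologicalSpace X]
    {f : X → ℝ≥0∞} : LowerSemicontinuous f ↔ ∀ r : ℝ≥0, IsClosed {x | f x ≤ r} := by
  rw [lowerSemicontinuous_iff_isClosed_preimage, ENNReal.forall_ennreal]
  simp [preimage, Iic]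

theorem distToSet_singleton {X : Type*} (d : X → X → ℝ≥0∞) (x y : X) :
    distToSet d x {y} = d x y :=
  iInf_singleton

theorem stmt_2_general {X : Type*} [TopologicalSpace X] [T3Space X]
    (d : X → X → ℝ≥0∞) (hsymm : ∀ x y, d x y = d y x)
    (h : ∀ F : Set X, IsClosed F → ∀ r : ℝ≥0, IsClosed {x : X | distToSet d x F ≤ (r : ℝ≥0∞)}) :
    ∀ r : ℝ≥0, IsClosed {p : X × X | d p.1 p.2 ≤ (r : ℝ≥0∞)} := by
  have hdist (F : Set X) (hF : IsClosed F) : LowerSemicontinuous fun x ↦ distToSet d x F :=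
    lowerSemicontinuous_ennreal_iff_isClosed_le_coe.2 (h F hF)
  have hpoint (y : X) : LowerSemicontinuous fun x ↦ d x y := by
    simpa only [distToSet_singleton] using hdist {y} isClosed_singleton
  have hinf (F : Set X) (hF : IsClosed F) : LowerSemicontinuous fun y ↦ ⨅ x ∈ F, d x y := by
    simpa only [distToSet, hsymm] using hdist F hF
  exact lowerSemicontinuous_ennreal_iff_isClosed_le_coe.1
    (lowerSemicontinuous_uncurry_of_iInf_isClosed hpoint hinf)

/-- on a regular Hausdorff space, if every closed set has closed metric
neighbourhoods then the extended metric is lower semi-continuous. -/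
theorem stmt_2 {X : Type*} [TopologicalSpace X] [T2Space X] [RegularSpace X]
    (d : X → X → ℝ≥0∞) (hmet : IsExtMetric d)
    (h : ∀ F : Set X, IsClosed F → ∀ r : ℝ≥0, IsClosed {x : X | distToSet d x F ≤ (r : ℝ≥0∞)}) :
    ∀ r : ℝ≥0, IsClosed {p : X × X | d p.1 p.2 ≤ (r : ℝ≥0∞)} :=
  stmt_2_general d hmet.2.1 h
end

section
/- Every compact topometric space X is metrically complete: every sequence (x_n) in X that is Cauchy with respect to the metric d converges with respect to d to some point of X. -/
open Set Topology NNReal ENNReal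

/-!
By compactness a Cauchy sequence has a cluster point `a` for the topology. Lower semi-continuity
makes closed metric balls closed for the topology, so the closed `ε`-ball around a late term, which
contains all late terms, also contains `a`.
-/

open Filter

lemma LowerSemiContinuousMetric.lowerSemicontinuous_left {X : Type*} [TopologicalSpace X]
    {d : X → X → ℝ≥0∞} (hd : LowerSemiContinuousMetric d) (z : X) :
    LowerSemicontinuous fun y ↦ d y z := by
  refine lowerSemicontinuous_iff_isClosed_preimage.2 fun r ↦ ?_
  cases r with
  | top => simp
  | coe r => exact (hd r).preimage (Continuous.prodMk_left z)

lemma tendsto_zero_of_cauchy_of_mapClusterPt {X ι : Type*} [TopologicalSpace X] {d : X → X → ℝ≥0∞}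
    (hd : ∀ z, LowerSemicontinuous fun y ↦ d y z) {l : Filter ι} {x : ι → X}
    (hx : Tendsto (fun p : ι × ι ↦ d (x p.1) (x p.2)) (l ×ˢ l) (𝓝 0)) {a : X}
    (ha : MapClusterPt a l x) : Tendsto (fun n ↦ d a (x n)) l (𝓝 0) := by
  rw [ENNReal.tendsto_nhds_zero] at hx ⊢
  intro ε hε
  have late_close : ∀ᶠ n in l, ∀ᶠ m in l, d (x m) (x n) ≤ ε :=
    (tendsto_prod_swap.eventually (hx ε hε)).curry
  filter_upwards [late_close] with n hn
  have isClosed_closedBall : IsClosed {y | d y (x n) ≤ ε} := (hd (x n)).isClosed_preimage ε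
  exact isClosed_closedBall.mem_of_mapClusterPt ha hn

lemma tendsto_nhds_zero_iff_forall_coe_lt {ι : Type*} {l : Filter ι} {f : ι → ℝ≥0∞} :
    Tendsto f l (𝓝 0) ↔ ∀ ε : ℝ≥0, 0 < ε → ∀ᶠ n in l, f n < ε := by
  refine ⟨fun hf ε hε ↦ hf.eventually_lt_const (ENNReal.coe_pos.2 hε), fun hf ↦ ?_⟩
  refine ENNReal.tendsto_nhds_zero.2 fun ε hε ↦ ?_
  obtain ⟨r, hr, hrε⟩ := ENNReal.lt_iff_exists_nnreal_btwn.1 hε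
  exact (hf r (ENNReal.coe_pos.1 hr)).mono fun n hn ↦ (hn.trans hrε).le

lemma tendsto_atTop_prod_zero_iff {ι : Type*} [Nonempty ι] [Preorder ι] [IsDirectedOrder ι]
    {f : ι → ι → ℝ≥0∞} :
    Tendsto (fun p : ι × ι ↦ f p.1 p.2) (atTop ×ˢ atTop) (𝓝 0) ↔
      ∀ ε : ℝ≥0, 0 < ε → ∃ N, ∀ m ≥ N, ∀ n ≥ N, f m n < ε := by
  simp only [tendsto_nhds_zero_iff_forall_coe_lt, prod_atTop_atTop_eq, eventually_atTop_prod_self']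

lemma tendsto_atTop_zero_iff {ι : Type*} [Nonempty ι] [Preorder ι] [IsDirectedOrder ι]
    {f : ι → ℝ≥0∞} :
    Tendsto f atTop (𝓝 0) ↔ ∀ ε : ℝ≥0, 0 < ε → ∃ N, ∀ n ≥ N, f n < ε := by
  simp only [tendsto_nhds_zero_iff_forall_coe_lt, eventually_atTop]

theorem stmt_4_general {X ι : Type*} [TopologicalSpace X] [CompactSpace X] {d : X → X → ℝ≥0∞}
    (hd : ∀ z, LowerSemicontinuous fun y ↦ d y z) {l : Filter ι} [NeBot l] {x : ι → X}
    (hx : Tendsto (fun p : ι × ι ↦ d (x p.1) (x p.2)) (l ×ˢ l) (𝓝 0)) :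
    ∃ a, Tendsto (fun n ↦ d a (x n)) l (𝓝 0) := by
  obtain ⟨a, ha⟩ := exists_clusterPt_of_compactSpace (map x l)
  exact ⟨a, tendsto_zero_of_cauchy_of_mapClusterPt hd hx ha⟩

/-- every compact topometric space is metrically complete: every sequence
which is Cauchy for the metric converges, for the metric, to a point of the space. -/
theorem stmt_4 {X : Type*} [TopologicalSpace X] [CompactSpace X] (d : X → X → ℝ≥0∞)
    (htm : IsTopometric d) (x : ℕ → X)
    (hcauchy : ∀ ε : ℝ≥0, 0 < ε → ∃ N : ℕ, ∀ m ≥ N, ∀ n ≥ N, d (x m) (x n) < (ε : ℝ≥0∞)) :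
    ∃ a : X, ∀ ε : ℝ≥0, 0 < ε → ∃ N : ℕ, ∀ n ≥ N, d a (x n) < (ε : ℝ≥0∞) := by
  simpa only [tendsto_atTop_zero_iff] using
    stmt_4_general htm.2.2.lowerSemicontinuous_left (tendsto_atTop_prod_zero_iff.2 hcauchy)
end

section
/- Let X be a compact topometric space, Y a topometric space, and f : X → Y weakly locally uniformly continuous. Then f is uniformly continuous: for every ε > 0 there is δ > 0 such that for all x, x' ∈ X, d_X(x,x') < δ implies d_Y(f(x),f(x')) ≤ ε. -/
open Set Topology NNReal ENNReal

/-- `f` is weakly locally uniformly continuous: every point has, for each `ε > 0`,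
an open neighbourhood `U` and `δ > 0` such that points of `U` at distance `< δ`
have images at distance `≤ ε`. -/
def WeaklyLocUnifCont {X Y : Type*} [TopologicalSpace X] [TopologicalSpace Y]
    (dX : X → X → ℝ≥0∞) (dY : Y → Y → ℝ≥0∞) (f : X → Y) : Prop :=
  ∀ x : X, ∀ ε : ℝ≥0, 0 < ε → ∃ U : Set X, IsOpen U ∧ x ∈ U ∧ ∃ δ : ℝ≥0, 0 < δ ∧
    ∀ y ∈ U, ∀ y' ∈ U, dX y y' < (δ : ℝ≥0∞) → dY (f y) (f y') ≤ (ε : ℝ≥0∞)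

/-!
Lower semicontinuity makes the metric bounded away from `0` near each off-diagonal point of the
compact space `X × X`, so every neighbourhood of the diagonal contains an entourage
`{(x, x') | d x x' < δ}`. A bound on close pairs therefore only has to be checked near the points
`(x, x)`, which is what weak local uniform continuity does, and compactness of the diagonal makes
the choice of `δ` uniform.
-/

section LowerSemicontinuous

open Filter

variable {Z β : Type*} [TopologicalSpace Z] [LinearOrder β] [TopologicalSpace β]
  [ClosedIciTopology β] {g : Z → β}

theorem disjoint_nhds_comap_nhds_of_lowerSemicontinuousAt {z : Z} {a : β}
    (hg : LowerSemicontinuousAt g z) (ha : a < g z) : Disjoint (𝓝 z) (comap g (𝓝 a)) := by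
  obtain ⟨u, hau, v, hvz, huv⟩ := ha.exists_disjoint_Iio_Ioi
  have hdisj : Disjoint {w | v < g w} (g ⁻¹' Iio u) :=
    Set.disjoint_left.2 fun w hvw hwu => (huv (g w) hwu (g w) hvw).false
  exact disjoint_of_disjoint_of_mem hdisj (hg v hvz) (preimage_mem_comap (Iio_mem_nhds hau))

theorem comap_nhds_le_nhdsSet_of_lowerSemicontinuous [CompactSpace Z]
    (hg : LowerSemicontinuous g) (a : β) : comap g (𝓝 a) ≤ 𝓝ˢ {z | g z ≤ a} := by
  refine (hasBasis_nhdsSet _).ge_iff.2 fun U ⟨hU, haU⟩ => ?_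
  have hdisj : Disjoint (comap g (𝓝 a)) (𝓝ˢ Uᶜ) :=
    hU.isClosed_compl.isCompact.disjoint_nhdsSet_right.2 fun z hz =>
      (disjoint_nhds_comap_nhds_of_lowerSemicontinuousAt (hg z)
        (not_le.1 fun hza => hz (haU hza))).symm
  simpa only [disjoint_principal_right, compl_compl]
    using hdisj.mono_right principal_le_nhdsSet

end LowerSemicontinuous

section MetricUniformity

open Filter

variable {X Y : Type*} {dX : X → X → ℝ≥0∞} {dY : Y → Y → ℝ≥0∞} {f : X → Y}

/-- The filter on `X × X` generated by the entourages `{(x, x') | d x x' < δ}`, `δ > 0`. It is the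
uniformity of `d` when `d` is an extended metric. For any function `d`, a property holds eventually
along this filter if it holds for all sufficiently `d`-close pairs. -/
def metricUniformity (d : X → X → ℝ≥0∞) : Filter (X × X) :=
  comap (fun p => d p.1 p.2) (𝓝 0)

theorem hasBasis_metricUniformity (d : X → X → ℝ≥0∞) :
    (metricUniformity d).HasBasis (fun δ : ℝ≥0 => 0 < δ) fun δ => {p | d p.1 p.2 < δ} := by
  refine (ENNReal.nhds_zero_basis.to_hasBasis (fun r hr => ?_) fun (δ : ℝ≥0) hδ =>
    ⟨(δ : ℝ≥0∞), ENNReal.coe_pos.2 hδ, Subset.rfl⟩).comap _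
  obtain ⟨δ, hδ, hδr⟩ := ENNReal.lt_iff_exists_nnreal_btwn.1 hr
  exact ⟨δ, ENNReal.coe_pos.1 hδ, Iio_subset_Iio hδr.le⟩

theorem eventually_metricUniformity_iff {d : X → X → ℝ≥0∞} {P : X × X → Prop} :
    (∀ᶠ p in metricUniformity d, P p) ↔
      ∃ δ : ℝ≥0, 0 < δ ∧ ∀ x x' : X, d x x' < δ → P (x, x') := by
  simp only [(hasBasis_metricUniformity d).eventually_iff, Prod.forall, mem_ofPred_eq]

variable [TopologicalSpace X]

theorem LowerSemiContinuousMetric.lowerSemicontinuous_s5 (hd : LowerSemiContinuousMetric dX) :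
    LowerSemicontinuous fun p : X × X => dX p.1 p.2 := by
  refine lowerSemicontinuous_iff_isClosed_preimage.2 fun r => ?_
  cases r with
  | top => simp only [Iic_top, preimage_univ, isClosed_univ]
  | coe r => exact hd r

theorem LowerSemiContinuousMetric.metricUniformity_le_nhdsSet_diagonal [CompactSpace X]
    (hd : LowerSemiContinuousMetric dX) (eq_of_dist_eq_zero : ∀ x y, dX x y = 0 → x = y) :
    metricUniformity dX ≤ 𝓝ˢ (diagonal X) :=
  (comap_nhds_le_nhdsSet_of_lowerSemicontinuous hd.lowerSemicontinuous_s5 0).trans <|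
    nhdsSet_mono fun p hp => eq_of_dist_eq_zero p.1 p.2 (nonpos_iff_eq_zero.1 hp)

theorem WeaklyLocUnifCont.eventually_dist_le [TopologicalSpace Y]
    (hf : WeaklyLocUnifCont dX dY f) {ε : ℝ≥0} (hε : 0 < ε) (x : X) :
    ∀ᶠ p in metricUniformity dX ⊓ 𝓝 (x, x), dY (f p.1) (f p.2) ≤ ε := by
  obtain ⟨U, hU, hxU, δ, hδ, hle⟩ := hf x ε hε
  filter_upwards [mem_inf_of_left ((hasBasis_metricUniformity dX).mem_of_mem hδ),
    mem_inf_of_right (prod_mem_nhds (hU.mem_nhds hxU) (hU.mem_nhds hxU))] with p hpδ hpU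
  exact hle p.1 hpU.1 p.2 hpU.2 hpδ

end MetricUniformity

theorem stmt_5_general {X Y : Type*} [TopologicalSpace X] [CompactSpace X] [TopologicalSpace Y]
    {dX : X → X → ℝ≥0∞} {dY : Y → Y → ℝ≥0∞}
    (eq_of_dist_eq_zero : ∀ x y, dX x y = 0 → x = y) (hX : LowerSemiContinuousMetric dX)
    {f : X → Y} (hf : WeaklyLocUnifCont dX dY f) {ε : ℝ≥0} (hε : 0 < ε) :
    ∃ δ : ℝ≥0, 0 < δ ∧
      ∀ x x' : X, dX x x' < (δ : ℝ≥0∞) → dY (f x) (f x') ≤ (ε : ℝ≥0∞) := by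
  have near_diagonal : ∀ᶠ p in metricUniformity dX ⊓ 𝓝ˢ (diagonal X), dY (f p.1) (f p.2) ≤ ε :=
    isCompact_diagonal.mem_inf_nhdsSet_of_forall <| by
      rintro ⟨x, x'⟩ (rfl : x = x')
      exact hf.eventually_dist_le hε x
  rw [inf_eq_left.2 (hX.metricUniformity_le_nhdsSet_diagonal eq_of_dist_eq_zero)] at near_diagonal
  exact eventually_metricUniformity_iff.1 near_diagonal

/-- a weakly locally uniformly continuous map from a compact topometric
space to a topometric space is uniformly continuous. -/
theorem stmt_5 {X Y : Type*} [TopologicalSpace X] [CompactSpace X] [TopologicalSpace Y]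
    (dX : X → X → ℝ≥0∞) (dY : Y → Y → ℝ≥0∞)
    (hX : IsTopometric dX) (hY : IsTopometric dY) (f : X → Y)
    (hf : WeaklyLocUnifCont dX dY f) :
    ∀ ε : ℝ≥0, 0 < ε → ∃ δ : ℝ≥0, 0 < δ ∧
      ∀ x x' : X, dX x x' < (δ : ℝ≥0∞) → dY (f x) (f x') ≤ (ε : ℝ≥0∞) :=
  fun _ hε => stmt_5_general (fun x y => (hX.1.1 x y).1) hX.2.2 hf hε
end

section
/- Let X be a compact topometric space and ∼ an equivalence relation on X which is closed as a subset of X × X and whose classes [x] satisfy d(x,[y]) = d([x],y) for all x, y ∈ X. Let Y = X/∼ with the quotient topology, let π : X → Y be the projection, and define d_Y(π(x),π(y)) = inf{d(x',y') : x' ∼ x, y' ∼ y}. Then d_Y is an extended metric making (Y, d_Y) a topometric space, and π is precise: d_Y(π(x), q) = d_X(x, π⁻¹(q)) for every x ∈ X and q ∈ Y. -/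
open Set Topology NNReal ENNReal

/-! The quotient distance is an infimum over pairs of representatives, so a priori it need not
satisfy the triangle inequality. The condition `d(x,[y]) = d([x],y)` makes `d(x,[y])` depend only on
the class of `x`; hence one representative can be prescribed freely, which is to say that the
projection is precise. Preciseness alone transports the metric axioms and the refinement of the
topology along a continuous surjection, except that distinct points could be at distance `0`; this
is excluded by closedness of points. For lower semi-continuity,
`{dY ≤ r} = ⋂ ε > 0, (π × π) {d ≤ r + ε}`, and `π × π` is a closed map because `π` is proper. -/

section PreciseMap

variable {X Y : Type*} {d : X → X → ℝ≥0∞} {dY : Y → Y → ℝ≥0∞} {f : X → Y}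

theorem distToSet_le_of_mem {x y : X} {A : Set X} (hy : y ∈ A) : distToSet d x A ≤ d x y :=
  iInf₂_le y hy

/-- A map is precise if the distance from the image of `x` to `q` is the distance from `x` to the
fibre over `q`. For `q` outside the range of `f` this forces `dY (f x) q = ∞`. -/
def IsPrecise (d : X → X → ℝ≥0∞) (dY : Y → Y → ℝ≥0∞) (f : X → Y) : Prop :=
  ∀ x q, dY (f x) q = distToSet d x (f ⁻¹' {q})

namespace IsPrecise

theorem map_le (hf : IsPrecise d dY f) (x y : X) : dY (f x) (f y) ≤ d x y :=
  (hf x (f y)).trans_le (distToSet_le_of_mem (mem_singleton (f y)))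

theorem map_lt_iff (hf : IsPrecise d dY f) {x : X} {q : Y} {r : ℝ≥0∞} :
    dY (f x) q < r ↔ ∃ y, f y = q ∧ d x y < r := by
  simp only [hf x q, distToSet, iInf_lt_iff, mem_preimage, mem_singleton_iff, exists_prop]

theorem symm (hf : IsPrecise d dY f) (hsurj : f.Surjective) (hd : ∀ x y, d x y = d y x)
    (p q : Y) : dY p q = dY q p := by
  have map_le_swap (x y : X) : dY (f x) (f y) ≤ dY (f y) (f x) := by
    rw [hf y]
    refine le_iInf₂ fun x' (hx' : f x' = f x) => ?_
    rw [← hx', hd y x']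
    exact hf.map_le x' y
  obtain ⟨x, rfl⟩ := hsurj p
  obtain ⟨y, rfl⟩ := hsurj q
  exact (map_le_swap x y).antisymm (map_le_swap y x)

theorem triangle (hf : IsPrecise d dY f) (hsurj : f.Surjective)
    (hd : ∀ x y z, d x z ≤ d x y + d y z) (p q t : Y) : dY p t ≤ dY p q + dY q t := by
  obtain ⟨x, rfl⟩ := hsurj p
  rw [hf x q, distToSet, ENNReal.iInf₂_add]
  refine le_iInf₂ fun y (hy : f y = q) => ?_
  subst hy
  rw [hf x t, hf y t, distToSet, distToSet, ENNReal.add_iInf₂]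
  exact le_iInf₂ fun z hz => (iInf₂_le z hz).trans (hd x y z)

theorem setOf_le_eq_iInter_image (hf : IsPrecise d dY f) (hsurj : f.Surjective) (r : ℝ≥0) :
    {p : Y × Y | dY p.1 p.2 ≤ r} =
      ⋂ (ε : ℝ≥0) (_ : 0 < ε), Prod.map f f '' {p | d p.1 p.2 ≤ (r + ε : ℝ≥0)} := by
  ext ⟨p, q⟩
  simp only [mem_iInter]
  constructor
  · intro hpq ε hε
    obtain ⟨x, rfl⟩ := hsurj p
    have hlt : dY (f x) q < (r + ε : ℝ≥0) :=
      lt_of_le_of_lt hpq (ENNReal.coe_lt_coe.2 (lt_add_of_pos_right r hε))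
    obtain ⟨y, rfl, hy⟩ := hf.map_lt_iff.1 hlt
    exact ⟨(x, y), hy.le, rfl⟩
  · intro hpq
    refine ENNReal.le_of_forall_pos_le_add fun ε hε _ => ?_
    obtain ⟨⟨x, y⟩, hxy, hxy_eq⟩ := hpq ε hε
    obtain ⟨rfl, rfl⟩ := Prod.mk.inj hxy_eq
    exact (hf.map_le x y).trans (hxy.trans_eq (ENNReal.coe_add r ε))

end IsPrecise

end PreciseMap

section Topometric

variable {X Y : Type*} [TopologicalSpace X] [TopologicalSpace Y]
  {d : X → X → ℝ≥0∞} {dY : Y → Y → ℝ≥0∞} {f : X → Y}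

theorem MetricRefines.eq_of_dist_eq_zero [T1Space X] (hd : MetricRefines d) {x y : X}
    (hxy : d x y = 0) : x = y := by
  by_contra hne
  obtain ⟨r, hr, hball⟩ := hd {y}ᶜ isOpen_compl_singleton x hne
  have hy : d x y < r := by simpa only [hxy, ENNReal.coe_pos] using hr
  exact hball hy rfl

theorem IsTopometric.t2Space (hd : IsTopometric d) : T2Space X := by
  obtain ⟨⟨dist_eq_zero, -, -⟩, -, hlsc⟩ := hd
  have diagonal_eq : diagonal X = {p | d p.1 p.2 ≤ (0 : ℝ≥0)} := by
    ext p
    simp only [mem_diagonal_iff, mem_ofPred_eq, ENNReal.coe_zero, nonpos_iff_eq_zero, dist_eq_zero]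
  rw [t2_iff_isClosed_diagonal, diagonal_eq]
  exact hlsc 0

namespace IsPrecise

theorem metricRefines (hf : IsPrecise d dY f) (hcont : Continuous f) (hsurj : f.Surjective)
    (hd : MetricRefines d) : MetricRefines dY := by
  intro U hU p hp
  obtain ⟨x, rfl⟩ := hsurj p
  obtain ⟨r, hr, hball⟩ := hd (f ⁻¹' U) (hU.preimage hcont) x hp
  refine ⟨r, hr, fun q hq => ?_⟩
  obtain ⟨y, rfl, hy⟩ := hf.map_lt_iff.1 hq
  exact hball hy

theorem isExtMetric [T1Space Y] (hf : IsPrecise d dY f) (hcont : Continuous f)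
    (hsurj : f.Surjective) (hd : IsExtMetric d) (href : MetricRefines d) : IsExtMetric dY := by
  obtain ⟨dist_eq_zero, dist_symm, dist_triangle⟩ := hd
  refine ⟨fun p q => ⟨(hf.metricRefines hcont hsurj href).eq_of_dist_eq_zero, ?_⟩,
    hf.symm hsurj dist_symm, hf.triangle hsurj dist_triangle⟩
  rintro rfl
  obtain ⟨x, rfl⟩ := hsurj p
  exact le_zero_iff.1 ((hf.map_le x x).trans_eq ((dist_eq_zero x x).2 rfl))

theorem lowerSemiContinuousMetric (hf : IsPrecise d dY f) (hsurj : f.Surjective)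
    (hclosed : IsClosedMap (Prod.map f f)) (hd : LowerSemiContinuousMetric d) :
    LowerSemiContinuousMetric dY := by
  intro r
  rw [hf.setOf_le_eq_iInter_image hsurj]
  exact isClosed_iInter fun ε => isClosed_iInter fun _ => hclosed _ (hd (r + ε))

theorem isTopometric (hf : IsPrecise d dY f) (hproper : IsProperMap f) (hsurj : f.Surjective)
    (hd : IsTopometric d) : IsTopometric dY := by
  have : T2Space X := hd.t2Space
  have : T1Space Y := ⟨hsurj.forall.2 fun x => by
    simpa only [image_singleton] using hproper.isClosedMap {x} isClosed_singleton⟩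
  obtain ⟨hmetric, href, hlsc⟩ := hd
  exact ⟨hf.isExtMetric hproper.continuous hsurj hmetric href,
    hf.metricRefines hproper.continuous hsurj href,
    hf.lowerSemiContinuousMetric hsurj (hproper.prodMap hproper).isClosedMap hlsc⟩

end IsPrecise

end Topometric

section ClosedKernel

variable {X Y : Type*} [TopologicalSpace X] [TopologicalSpace Y] [CompactSpace X] {f : X → Y}

theorem isClosedMap_of_isQuotientMap_of_isClosed_ker (hf : IsQuotientMap f)
    (hker : IsClosed {p : X × X | f p.1 = f p.2}) : IsClosedMap f := by
  intro C hC
  have saturation_eq :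
      f ⁻¹' (f '' C) = Prod.snd '' ({p : X × X | f p.1 = f p.2} ∩ Prod.fst ⁻¹' C) := by
    ext y
    constructor
    · rintro ⟨x, hx, hxy⟩
      exact ⟨(x, y), ⟨hxy, hx⟩, rfl⟩
    · rintro ⟨⟨x, _⟩, ⟨hxy, hx⟩, rfl⟩
      exact ⟨x, hx, hxy⟩
  rw [← hf.isClosed_preimage, saturation_eq]
  exact isClosedMap_snd_of_compactSpace _ (hker.inter (hC.preimage continuous_fst))

theorem isProperMap_of_isQuotientMap_of_isClosed_ker (hf : IsQuotientMap f)
    (hker : IsClosed {p : X × X | f p.1 = f p.2}) : IsProperMap f := by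
  refine isProperMap_iff_isClosedMap_and_compact_fibers.2
    ⟨hf.continuous, isClosedMap_of_isQuotientMap_of_isClosed_ker hf hker, hf.surjective.forall.2 ?_⟩
  intro x
  have isClosed_fiber : IsClosed {y | f y = f x} :=
    hker.preimage (f := fun y => (y, x)) (by fun_prop)
  exact isClosed_fiber.isCompact

end ClosedKernel

section Quotient

variable {X : Type*} {d : X → X → ℝ≥0∞} {s : Setoid X}

theorem preimage_quotientMk_singleton (y : X) :
    Quotient.mk s ⁻¹' {Quotient.mk s y} = {y' | s.r y y'} := by
  ext y'
  exact Quotient.eq.trans s.comm'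

theorem distToSet_class_congr
    (hclass : ∀ x y, distToSet d x {y' | s.r y y'} = distToSet d y {x' | s.r x x'})
    {x x' : X} (hxx' : s.r x x') (y : X) :
    distToSet d x {y' | s.r y y'} = distToSet d x' {y' | s.r y y'} := by
  rw [hclass x y, hclass x' y, ← preimage_quotientMk_singleton x,
    ← preimage_quotientMk_singleton x', Quotient.sound hxx']

theorem isPrecise_quotientMk {dY : Quotient s → Quotient s → ℝ≥0∞}
    (hclass : ∀ x y, distToSet d x {y' | s.r y y'} = distToSet d y {x' | s.r x x'})
    (hdY : ∀ x y, dY (Quotient.mk s x) (Quotient.mk s y) =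
      ⨅ x' ∈ {x' | s.r x x'}, ⨅ y' ∈ {y' | s.r y y'}, d x' y') :
    IsPrecise d dY (Quotient.mk s) := by
  intro x
  refine Quotient.ind fun y => ?_
  rw [preimage_quotientMk_singleton, hdY]
  apply le_antisymm
  · exact iInf₂_le x (s.refl x)
  · exact le_iInf₂ fun x' hx' => (distToSet_class_congr hclass hx' y).le

end Quotient

/-- a closed equivalence relation on a compact topometric space satisfying
`d(x,[y]) = d([x],y)` yields a topometric structure on the quotient for which the
projection is precise. -/
theorem stmt_8 {X : Type*} [TopologicalSpace X] [CompactSpace X]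
    (d : X → X → ℝ≥0∞) (hX : IsTopometric d) (s : Setoid X)
    (hclosed : IsClosed {p : X × X | s.r p.1 p.2})
    (hclass : ∀ x y : X, distToSet d x {y' | s.r y y'} = distToSet d y {x' | s.r x x'})
    (dY : Quotient s → Quotient s → ℝ≥0∞)
    (hdY : ∀ x y : X, dY (Quotient.mk s x) (Quotient.mk s y) =
      ⨅ x' ∈ {x' | s.r x x'}, ⨅ y' ∈ {y' | s.r y y'}, d x' y') :
    IsExtMetric dY ∧ MetricRefines dY ∧ LowerSemiContinuousMetric dY ∧
      ∀ (x : X) (q : Quotient s),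
        dY (Quotient.mk s x) q = distToSet d x (Quotient.mk s ⁻¹' {q}) := by
  have hmk : IsQuotientMap (Quotient.mk s) := isQuotientMap_quotient_mk'
  have hproper : IsProperMap (Quotient.mk s) :=
    isProperMap_of_isQuotientMap_of_isClosed_ker hmk (by simpa only [Quotient.eq] using hclosed)
  have hprecise : IsPrecise d dY (Quotient.mk s) := isPrecise_quotientMk hclass hdY
  obtain ⟨hmetric, href, hlsc⟩ := hprecise.isTopometric hproper hmk.surjective hX
  exact ⟨hmetric, href, hlsc, hprecise⟩
end

section
/- The set of weakly d-isolated points of a topometric space X is metrically closed: if x ∈ X is such that for every r > 0 there is a weakly d-isolated point y ∈ X with d(x,y) < r, then x is itself weakly d-isolated. -/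
open Set Topology NNReal ENNReal

/-- `x` is d-isolated: for every `r > 0`, `x` lies in the interior of the ball `B(x,r)`. -/
def DIsolated {X : Type*} [TopologicalSpace X] (d : X → X → ℝ≥0∞) (x : X) : Prop :=
  ∀ r : ℝ≥0, 0 < r → x ∈ interior {y : X | d x y < (r : ℝ≥0∞)}

/-- `x` is weakly d-isolated: for every `r > 0`, the ball `B(x,r)` has non-empty
interior. -/
def WeaklyDIsolated {X : Type*} [TopologicalSpace X] (d : X → X → ℝ≥0∞) (x : X) : Prop :=
  ∀ r : ℝ≥0, 0 < r → (interior {y : X | d x y < (r : ℝ≥0∞)}).Nonempty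

section TriangleInequality

variable {X : Type*} {d : X → X → ℝ≥0∞} {x y : X}

theorem setOf_lt_subset_setOf_lt_of_add_le (htri : ∀ x y z, d x z ≤ d x y + d y z)
    {r s : ℝ≥0∞} (hxy : d x y ≠ ∞) (hsr : d x y + s ≤ r) :
    {z | d y z < s} ⊆ {z | d x z < r} := fun z (hz : d y z < s) ↦
  calc
    d x z ≤ d x y + d y z := htri x y z
    _ < d x y + s := ENNReal.add_lt_add_left hxy hz
    _ ≤ r := hsr

theorem WeaklyDIsolated.nonempty_interior_setOf_lt [TopologicalSpace X]
    (hy : WeaklyDIsolated d y) (htri : ∀ x y z, d x z ≤ d x y + d y z)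
    {r : ℝ≥0∞} (hxy : d x y < r) : (interior {z | d x z < r}).Nonempty := by
  obtain ⟨s, hs, hsr⟩ := ENNReal.lt_iff_exists_add_pos_lt.mp hxy
  exact (hy s hs).mono <|
    interior_mono (setOf_lt_subset_setOf_lt_of_add_le htri hxy.ne_top hsr.le)

theorem stmt_9_general [TopologicalSpace X] (htri : ∀ x y z, d x z ≤ d x y + d y z)
    (h : ∀ r : ℝ≥0, 0 < r → ∃ y : X, WeaklyDIsolated d y ∧ d x y < (r : ℝ≥0∞)) :
    WeaklyDIsolated d x := by
  intro r hr
  obtain ⟨y, hy, hxy⟩ := h r hr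
  exact hy.nonempty_interior_setOf_lt htri hxy

end TriangleInequality

/-- the set of weakly d-isolated points of a topometric space is metrically
closed. -/
theorem stmt_9 {X : Type*} [TopologicalSpace X] (d : X → X → ℝ≥0∞)
    (htm : IsTopometric d) (x : X)
    (h : ∀ r : ℝ≥0, 0 < r → ∃ y : X, WeaklyDIsolated d y ∧ d x y < (r : ℝ≥0∞)) :
    WeaklyDIsolated d x :=
  stmt_9_general htm.1.2.2 h
end

section
/- Let π : X → Y be a morphism between locally compact topometric spaces, x ∈ X and y = π(x). If π is an open map and x is d-isolated in X, then y is d-isolated in Y. If π is weakly open (the image of every non-empty open set has non-empty interior) and x is weakly d-isolated in X, then y is weakly d-isolated in Y. -/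
open Set Topology NNReal ENNReal

/-!
Because the metric of `X` refines its topology, a small metric ball around `x` lies in the
neighbourhood on which weak local uniform continuity controls `π`, so `π` is continuous at `x` for
the metrics: some ball `B(x, δ)` is mapped into `B(π x, r)`. An open (resp. weakly open) `π` then
carries the interior of `B(x, δ)` onto a neighbourhood of `π x` (resp. a set with non-empty
interior) inside `B(π x, r)`.
-/

/-- The map `f` is continuous at `x` for the metrics `dX` and `dY`, regardless of the topologies.
The radii are finite, as in `DIsolated` and `WeaklyDIsolated`. -/
def MetricContinuousAt {X Y : Type*} (dX : X → X → ℝ≥0∞) (dY : Y → Y → ℝ≥0∞)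
    (f : X → Y) (x : X) : Prop :=
  ∀ r : ℝ≥0, 0 < r → ∃ δ : ℝ≥0, 0 < δ ∧
    MapsTo f {x' | dX x x' < (δ : ℝ≥0∞)} {y | dY (f x) y < (r : ℝ≥0∞)}

/-- A weakly open map: the image of every non-empty open set has non-empty interior. -/
def IsWeaklyOpenMap {X Y : Type*} [TopologicalSpace X] [TopologicalSpace Y] (f : X → Y) : Prop :=
  ∀ U : Set X, IsOpen U → U.Nonempty → (interior (f '' U)).Nonempty

section

variable {X Y : Type*} [TopologicalSpace X] [TopologicalSpace Y]
  {dX : X → X → ℝ≥0∞} {dY : Y → Y → ℝ≥0∞} {f : X → Y} {x : X}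

theorem WeaklyLocUnifCont.metricContinuousAt (hf : WeaklyLocUnifCont dX dY f)
    (hdX : MetricRefines dX) (x : X) : MetricContinuousAt dX dY f x := by
  intro r hr
  obtain ⟨U, hU, hxU, δ, hδ, hfU⟩ := hf x (r / 2) (half_pos hr)
  obtain ⟨s, hs, hball⟩ := hdX U hU x hxU
  refine ⟨min δ s, lt_min hδ hs, fun x' hx' => ?_⟩
  obtain ⟨hx'δ, hx's⟩ : dX x x' < δ ∧ dX x x' < s := by
    simpa only [mem_ofPred_eq, ENNReal.coe_min, lt_min_iff] using hx'
  calc dY (f x) (f x') ≤ (r / 2 : ℝ≥0) := hfU x hxU x' (hball hx's) hx'δ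
    _ < r := ENNReal.coe_lt_coe.2 (half_lt_self hr.ne')

theorem DIsolated.image_of_nhds_le (hx : DIsolated dX x) (hfx : MetricContinuousAt dX dY f x)
    (hnhds : 𝓝 (f x) ≤ Filter.map f (𝓝 x)) : DIsolated dY (f x) := by
  intro r hr
  obtain ⟨δ, hδ, hmaps⟩ := hfx r hr
  have hball : {x' | dX x x' < (δ : ℝ≥0∞)} ∈ 𝓝 x := mem_interior_iff_mem_nhds.1 (hx δ hδ)
  exact mem_interior_iff_mem_nhds.2 <| hnhds <| Filter.mem_map.2 <|
    Filter.mem_of_superset hball hmaps.subset_preimage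

theorem WeaklyDIsolated.image_of_isWeaklyOpenMap (hx : WeaklyDIsolated dX x)
    (hfx : MetricContinuousAt dX dY f x) (hf : IsWeaklyOpenMap f) : WeaklyDIsolated dY (f x) := by
  intro r hr
  obtain ⟨δ, hδ, hmaps⟩ := hfx r hr
  have himage : f '' interior {x' | dX x x' < (δ : ℝ≥0∞)} ⊆ {y | dY (f x) y < (r : ℝ≥0∞)} :=
    (hmaps.mono_left interior_subset).image_subset
  exact (hf _ isOpen_interior (hx δ hδ)).mono (interior_mono himage)

end

theorem stmt_11_general {X Y : Type*} [TopologicalSpace X] [TopologicalSpace Y]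
    (dX : X → X → ℝ≥0∞) (dY : Y → Y → ℝ≥0∞) (hdX : MetricRefines dX)
    (π : X → Y) (hwluc : WeaklyLocUnifCont dX dY π) (x : X) :
    (IsOpenMap π → DIsolated dX x → DIsolated dY (π x)) ∧
    (IsWeaklyOpenMap π → WeaklyDIsolated dX x → WeaklyDIsolated dY (π x)) := by
  have hπx : MetricContinuousAt dX dY π x := hwluc.metricContinuousAt hdX x
  exact ⟨fun hopen hx => hx.image_of_nhds_le hπx (hopen.nhds_le x),
    fun hopen hx => hx.image_of_isWeaklyOpenMap hπx hopen⟩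

/-- along a morphism of locally compact topometric spaces, (weak)
d-isolation is pushed forward when the map is (weakly) open. -/
theorem stmt_11 {X Y : Type*} [TopologicalSpace X] [LocallyCompactSpace X]
    [TopologicalSpace Y] [LocallyCompactSpace Y]
    (dX : X → X → ℝ≥0∞) (dY : Y → Y → ℝ≥0∞)
    (hX : IsTopometric dX) (hY : IsTopometric dY)
    (π : X → Y) (hcont : Continuous π) (hwluc : WeaklyLocUnifCont dX dY π) (x : X) :
    (IsOpenMap π → DIsolated dX x → DIsolated dY (π x)) ∧
    ((∀ U : Set X, IsOpen U → U.Nonempty → (interior (π '' U)).Nonempty) →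
      WeaklyDIsolated dX x → WeaklyDIsolated dY (π x)) :=
  stmt_11_general dX dY hX.2.1 π hwluc x
end

section
/- Let X be a topometric space, U ⊆ X an open subset, and ε > 0. If U is ε-bounded, then U is the union of open sets of diameter ≤ 2ε: for every a ∈ U there is an open set V with a ∈ V ⊆ U and diameter of V at most 2ε. -/
open Set Topology NNReal ENNReal

/-- `A` is ε-bounded: there is no infinite subset of `A` whose points are pairwise at
distance `> ε`. -/
def EpsBounded {X : Type*} (d : X → X → ℝ≥0∞) (ε : ℝ≥0) (A : Set X) : Prop :=
  ¬ ∃ S : Set X, S ⊆ A ∧ S.Infinite ∧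
    ∀ a ∈ S, ∀ b ∈ S, a ≠ b → (ε : ℝ≥0∞) < d a b

/-! Given `a ∈ U`, take a maximal set `N` of points of `U` that are at distance `> ε` from `a` and
pairwise at distance `> ε`; it is finite because `U` is `ε`-bounded. By lower semi-continuity, the
points of `U` at distance `> ε` from all of `N` form an open set, which contains `a`. Maximality of
`N` puts every point of this open set within `ε` of `a`, so its diameter is at most `2ε`. -/

section Separated

variable {X : Type*} {R : SetRel X X}

lemma exists_maximal_relIsSeparated (R : SetRel X X) (s : Set X) :
    ∃ N, Maximal (fun N ↦ N ⊆ s ∧ R.IsSeparated N) N :=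
  zorn_subset {N | N ⊆ s ∧ R.IsSeparated N} fun c hcS hc ↦
    ⟨⋃₀ c, ⟨sUnion_subset fun _ hN ↦ (hcS hN).1, hc.pairwise_sUnion.2 fun _ hN ↦ (hcS hN).2⟩,
      fun _ ↦ subset_sUnion_of_mem⟩

lemma exists_finite_relIsCover_of_finite_relIsSeparated [R.IsRefl] [R.IsSymm] {s : Set X}
    (hfin : ∀ N ⊆ s, R.IsSeparated N → N.Finite) :
    ∃ N ⊆ s, N.Finite ∧ R.IsCover s N := by
  obtain ⟨N, hN⟩ := exists_maximal_relIsSeparated R s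
  exact ⟨N, hN.prop.1, hfin N hN.prop.1 hN.prop.2, .of_maximal_isSeparated hN⟩

lemma eventually_rel_of_finite_relIsSeparated [TopologicalSpace X] [R.IsRefl] [R.IsSymm]
    (hclosed : ∀ x, IsClosed {y | (x, y) ∈ R}) {U : Set X} {a : X} (hU : U ∈ 𝓝 a)
    (hfin : ∀ N ⊆ U, R.IsSeparated N → N.Finite) :
    ∀ᶠ y in 𝓝 a, (a, y) ∈ R := by
  obtain ⟨N, hNfar, hN, hcover⟩ :=
    exists_finite_relIsCover_of_finite_relIsSeparated (R := R) (s := {y ∈ U | (a, y) ∉ R})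
      fun N hNfar ↦ hfin N fun y hy ↦ (hNfar hy).1
  have hfar : ∀ᶠ y in 𝓝 a, ∀ x ∈ N, (x, y) ∉ R :=
    (Filter.eventually_all_finite hN).2 fun x hx ↦
      (hclosed x).isOpen_compl.mem_nhds fun hxa ↦ (hNfar hx).2 (R.symm hxa)
  filter_upwards [hU, hfar] with y hyU hyN
  by_contra hay
  obtain ⟨x, hx, hyx⟩ := hcover ⟨hyU, hay⟩
  exact hyN x hx (R.symm hyx)

end Separated

section EpsBounded

variable {X : Type*} {d : X → X → ℝ≥0∞} {ε : ℝ≥0} {U : Set X}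

lemma EpsBounded.finite_of_relIsSeparated (hb : EpsBounded d ε U) {N : Set X} (hNU : N ⊆ U)
    (hN : SetRel.IsSeparated {p : X × X | d p.1 p.2 ≤ ε} N) : N.Finite := by
  by_contra hinf
  exact hb ⟨N, hNU, hinf, fun _ hx _ hy hxy ↦ not_le.1 (hN hx hy hxy)⟩

lemma EpsBounded.eventually_dist_le [TopologicalSpace X] (hb : EpsBounded d ε U)
    (hself : ∀ x, d x x = 0) (hsymm : ∀ x y, d x y = d y x)
    (hclosed : ∀ x, IsClosed {y | d x y ≤ ε}) {a : X} (hU : U ∈ 𝓝 a) :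
    ∀ᶠ y in 𝓝 a, d a y ≤ ε := by
  let R : SetRel X X := {p | d p.1 p.2 ≤ ε}
  have : R.IsRefl := ⟨fun x ↦ (hself x).trans_le zero_le⟩
  have : R.IsSymm := ⟨fun x y hxy ↦ (hsymm y x).trans_le hxy⟩
  exact eventually_rel_of_finite_relIsSeparated (R := R) hclosed hU
    fun _ ↦ hb.finite_of_relIsSeparated

end EpsBounded

theorem stmt_13_general {X : Type*} [TopologicalSpace X] {d : X → X → ℝ≥0∞}
    (hself : ∀ x, d x x = 0) (hsymm : ∀ x y, d x y = d y x)
    (htriangle : ∀ x y z, d x z ≤ d x y + d y z) {U : Set X} (hU : IsOpen U) {ε : ℝ≥0}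
    (hclosed : ∀ x, IsClosed {y | d x y ≤ ε}) (hb : EpsBounded d ε U) :
    ∀ a ∈ U, ∃ V : Set X, IsOpen V ∧ a ∈ V ∧ V ⊆ U ∧
      ∀ x ∈ V, ∀ y ∈ V, d x y ≤ ((2 * ε : ℝ≥0) : ℝ≥0∞) := by
  intro a ha
  have hUa : U ∈ 𝓝 a := hU.mem_nhds ha
  obtain ⟨V, hV, hVopen, haV⟩ := eventually_nhds_iff.1
    (Filter.Eventually.and hUa (hb.eventually_dist_le hself hsymm hclosed hUa))
  refine ⟨V, hVopen, haV, fun x hx ↦ (hV x hx).1, fun x hx y hy ↦ ?_⟩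
  calc
    d x y ≤ d x a + d a y := htriangle x a y
    _ = d a x + d a y := by rw [hsymm x a]
    _ ≤ ε + ε := add_le_add (hV x hx).2 (hV y hy).2
    _ = ((2 * ε : ℝ≥0) : ℝ≥0∞) := by rw [two_mul, ENNReal.coe_add]

/-- an open ε-bounded subset of a topometric space is a union of open sets
of diameter at most `2ε`. -/
theorem stmt_13 {X : Type*} [TopologicalSpace X] (d : X → X → ℝ≥0∞)
    (htm : IsTopometric d) (U : Set X) (hU : IsOpen U) (ε : ℝ≥0) (hε : 0 < ε)
    (hb : EpsBounded d ε U) :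
    ∀ a ∈ U, ∃ V : Set X, IsOpen V ∧ a ∈ V ∧ V ⊆ U ∧
      ∀ x ∈ V, ∀ y ∈ V, d x y ≤ ((2 * ε : ℝ≥0) : ℝ≥0∞) :=
  stmt_13_general (fun x ↦ (htm.1.1 x x).2 rfl) htm.1.2.1 htm.1.2.2 hU
    (fun x ↦ (htm.2.2 ε).preimage (Continuous.prodMk_right x)) hb
end

section
/- Let X be a locally compact CB-analysable topometric space. Then the set of d-isolated points of X is topologically dense in X: every non-empty open subset of X contains a d-isolated point. -/
open Set Topology NNReal ENNReal

/-- `A` has diameter at most `ε`. -/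
def DiamLE {X : Type*} (d : X → X → ℝ≥0∞) (ε : ℝ≥0) (A : Set X) : Prop :=
  ∀ a ∈ A, ∀ b ∈ A, d a b ≤ (ε : ℝ≥0∞)

/-- `A` is ε-n-finite: there are no points `a 0, …, a n ∈ A` pairwise at distance
`> ε`. -/
def EpsNFinite {X : Type*} (d : X → X → ℝ≥0∞) (ε : ℝ≥0) (n : ℕ) (A : Set X) : Prop :=
  ¬ ∃ a : Fin (n + 1) → X, (∀ i, a i ∈ A) ∧
    ∀ i j : Fin (n + 1), i < j → (ε : ℝ≥0∞) < d (a i) (a j)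

/-- `A` is ε-finite: it is ε-n-finite for some `n`. -/
def EpsFinite {X : Type*} (d : X → X → ℝ≥0∞) (ε : ℝ≥0) (A : Set X) : Prop :=
  ∃ n : ℕ, EpsNFinite d ε n A

/-- `V` is a relatively open subset of `Y`. -/
def RelOpenIn {X : Type*} [TopologicalSpace X] (Y V : Set X) : Prop :=
  ∃ U : Set X, IsOpen U ∧ V = U ∩ Y

/-- The Cantor–Bendixson derivative of `Y` associated with a smallness predicate `P`:
remove from `Y` the union of all relatively open subsets of `Y` satisfying `P`. -/
def cbDeriv {X : Type*} [TopologicalSpace X] (P : Set X → Prop) (Y : Set X) : Set X :=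
  Y \ ⋃₀ {V : Set X | RelOpenIn Y V ∧ P V}

/-- The transfinite Cantor–Bendixson derivative sequence of a derivative operator `D`:
`univ` at `0`, apply `D` at successors, intersect at limits. -/
noncomputable def cbSeq {X : Type*} (D : Set X → Set X) (o : Ordinal) : Set X :=
  Ordinal.limitRecOn o Set.univ (fun _ ih => D ih)
    (fun o _ ih => ⋂ (b : Ordinal) (h : b < o), ih b h)

/-- `X` is CB-analysable: for every `ε > 0`, some transfinite (d,ε)-Cantor–Bendixson
derivative of `X` is empty. -/
def CBAnalysable (X : Type*) [TopologicalSpace X] (d : X → X → ℝ≥0∞) : Prop :=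
  ∀ ε : ℝ≥0, 0 < ε → ∃ α : Ordinal.{0}, cbSeq (cbDeriv (DiamLE d ε)) α = (∅ : Set X)

/-!
An open set contained in the first derivative has no non-empty small open subset, so no derivation
step can remove any of its points and it is contained in every derivative. If the sequence reaches
`∅`, the first derivative therefore has empty interior; being closed, it is nowhere dense. A point
lying outside the first `(d,ε)`-derivative for arbitrarily small `ε` is d-isolated, so in a
CB-analysable space the d-isolated points are comeagre, and Baire category applies.
-/

section CantorBendixson

variable {X : Type*}

theorem subset_cbSeq {D : Set X → Set X} {W : Set X} (hD : ∀ Y, W ⊆ Y → W ⊆ D Y)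
    (α : Ordinal) : W ⊆ cbSeq D α := by
  induction α using Ordinal.limitRecOn with
  | zero => simpa only [cbSeq, Ordinal.limitRecOn_zero] using subset_univ W
  | add_one β ih => simpa only [cbSeq, Ordinal.limitRecOn_add_one] using hD _ ih
  | limit α hα ih => simpa only [cbSeq, Ordinal.limitRecOn_limit _ _ _ _ hα] using subset_iInter₂ ih

variable [TopologicalSpace X] {P : Set X → Prop}

theorem cbDeriv_eq_diff_sUnion (P : Set X → Prop) (Y : Set X) :
    cbDeriv P Y = Y \ ⋃₀ {U | IsOpen U ∧ P (U ∩ Y)} := by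
  ext x
  refine and_congr_right fun hxY => not_congr ⟨?_, ?_⟩
  · rintro ⟨_, ⟨⟨U, hU, rfl⟩, hP⟩, hxU⟩
    exact ⟨U, ⟨hU, hP⟩, hxU.1⟩
  · rintro ⟨U, ⟨hU, hP⟩, hxU⟩
    exact ⟨U ∩ Y, ⟨⟨U, hU, rfl⟩, hP⟩, hxU, hxY⟩

theorem notMem_cbDeriv_univ_iff {x : X} :
    x ∉ cbDeriv P univ ↔ ∃ U, IsOpen U ∧ P U ∧ x ∈ U := by
  simp [cbDeriv_eq_diff_sUnion, and_assoc]

theorem isClosed_cbDeriv {Y : Set X} (hY : IsClosed Y) : IsClosed (cbDeriv P Y) := by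
  rw [cbDeriv_eq_diff_sUnion]
  exact hY.sdiff (isOpen_sUnion fun _ hU => hU.1)

theorem subset_cbDeriv_of_isOpen (hP : Antitone P) {W Y : Set X} (hW : IsOpen W)
    (hW_deriv : W ⊆ cbDeriv P univ) (hWY : W ⊆ Y) : W ⊆ cbDeriv P Y := by
  rw [cbDeriv_eq_diff_sUnion]
  rintro w hw
  refine ⟨hWY hw, ?_⟩
  rintro ⟨U, ⟨hU, hUP⟩, hwU⟩
  have small : P (U ∩ W) := hP (inter_subset_inter_right U hWY) hUP
  exact notMem_cbDeriv_univ_iff.2 ⟨U ∩ W, hU.inter hW, small, hwU, hw⟩ (hW_deriv hw)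

theorem interior_cbDeriv_univ_eq_empty (hP : Antitone P) {α : Ordinal}
    (hα : cbSeq (cbDeriv P) α = ∅) : interior (cbDeriv P univ) = ∅ :=
  subset_eq_empty
    (subset_cbSeq (fun _ => subset_cbDeriv_of_isOpen hP isOpen_interior interior_subset) α) hα

theorem compl_cbDeriv_univ_mem_residual (hP : Antitone P) {α : Ordinal}
    (hα : cbSeq (cbDeriv P) α = ∅) : (cbDeriv P univ)ᶜ ∈ residual X :=
  residual_of_dense_open (isClosed_cbDeriv isClosed_univ).isOpen_compl
    (interior_eq_empty_iff_dense_compl.1 (interior_cbDeriv_univ_eq_empty hP hα))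

end CantorBendixson

section DIsolated

variable {X : Type*} {d : X → X → ℝ≥0∞}

theorem antitone_diamLE (d : X → X → ℝ≥0∞) (ε : ℝ≥0) : Antitone (DiamLE d ε) :=
  fun _ _ hAB hB a ha b hb => hB a (hAB ha) b (hAB hb)

variable [TopologicalSpace X]

theorem mem_interior_ball_of_notMem_cbDeriv {ε r : ℝ≥0} (hεr : ε < r) {x : X}
    (hx : x ∉ cbDeriv (DiamLE d ε) univ) : x ∈ interior {y | d x y < r} := by
  obtain ⟨U, hU, hdiam, hxU⟩ := notMem_cbDeriv_univ_iff.1 hx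
  exact mem_interior.2
    ⟨U, fun y hy => (hdiam x hxU y hy).trans_lt (ENNReal.coe_lt_coe.2 hεr), hU, hxU⟩

theorem CBAnalysable.eventually_residual_dIsolated (han : CBAnalysable X d) :
    ∀ᶠ x in residual X, DIsolated d x := by
  obtain ⟨ε, -, ε_pos, ε_tendsto⟩ := exists_seq_strictAnti_tendsto (0 : ℝ≥0)
  have avoids_derivs : ∀ᶠ x in residual X, ∀ n, x ∉ cbDeriv (DiamLE d (ε n)) univ := by
    refine eventually_countable_forall.2 fun n => ?_
    obtain ⟨α, hα⟩ := han (ε n) (ε_pos n)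
    exact compl_cbDeriv_univ_mem_residual (antitone_diamLE d (ε n)) hα
  filter_upwards [avoids_derivs] with x hx r hr
  obtain ⟨n, hn⟩ := (ε_tendsto.eventually_lt_const hr).exists
  exact mem_interior_ball_of_notMem_cbDeriv hn (hx n)

theorem LowerSemiContinuousMetric.t2Space (hlsc : LowerSemiContinuousMetric d)
    (hzero : ∀ x y, d x y = 0 ↔ x = y) : T2Space X := by
  have diagonal_eq : diagonal X = {p | d p.1 p.2 ≤ (0 : ℝ≥0)} := by
    ext ⟨x, y⟩
    simp [hzero]
  rw [t2_iff_isClosed_diagonal, diagonal_eq]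
  exact hlsc 0

end DIsolated

theorem stmt_15_general {X : Type*} [TopologicalSpace X] [BaireSpace X]
    (d : X → X → ℝ≥0∞) (han : CBAnalysable X d) :
    ∀ U : Set X, IsOpen U → U.Nonempty → ∃ x ∈ U, DIsolated d x :=
  dense_iff_inter_open.1 (dense_of_mem_residual han.eventually_residual_dIsolated)

/-- in a locally compact CB-analysable topometric space, the d-isolated
points are topologically dense. -/
theorem stmt_15 {X : Type*} [TopologicalSpace X] [LocallyCompactSpace X]
    (d : X → X → ℝ≥0∞) (htm : IsTopometric d) (han : CBAnalysable X d) :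
    ∀ U : Set X, IsOpen U → U.Nonempty → ∃ x ∈ U, DIsolated d x := by
  have : T2Space X := htm.2.2.t2Space htm.1.1
  exact stmt_15_general d han
end
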